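/- Consider a tensor game with tensor constraints in which each cost A_i[·]x is multilinear, and suppose O_i = ∅ for all i (no constraints), so that the game reduces to an ordinary tensor game; then an equilibrium exists, i.e., there exists x* with each x_i* ∈ Δ^{m_i-1} such that A_i[·](x_i*, x*_{¬i}) ≤ A_i[·](x_i, x*_{¬i}) for all x_i ∈ Δ^{m_i-1} and all i. -/

import Mathlib

open Finset Real Filter

noncomputable def contract {N : ℕ} {m : Fin N → ℕ}
    (T : (∀ i, Fin (m i)) → ℝ) (x : ∀ i, Fin (m i) → ℝ) : ℝ :=
  ∑ K : ∀ i, Fin (m i), T K * ∏ i, x i (K i)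

def stdSimplex' (n : ℕ) : Set (Fin n → ℝ) :=
  {x | (∀ k, 0 ≤ x k) ∧ ∑ k, x k = 1}

section Scarf
set_option linter.unusedSectionVars false
variable {ι V : Type*} [Fintype ι] [DecidableEq ι] [Fintype V] [DecidableEq V]

def Dominating (u : ι → V → ℤ) (τ : Finset V) : Prop := ∀ y, ∃ i, ∀ x ∈ τ, u i y ≤ u i x

def IsMins (u : ι → V → ℤ) (τ : Finset V) (m : ι → V) : Prop :=
  ∀ i, m i ∈ τ ∧ ∀ x ∈ τ, u i (m i) ≤ u i x

theorem exists_mins (u : ι → V → ℤ) (τ : Finset V) (h : τ.Nonempty) : ∃ m, IsMins u τ m := by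
  have : ∀ i, ∃ y, y ∈ τ ∧ ∀ x ∈ τ, u i y ≤ u i x := fun i => τ.exists_min_image (u i) h
  choose m hm using this
  exact ⟨m, hm⟩

theorem mins_surj {u : ι → V → ℤ} (hu : ∀ i, Function.Injective (u i)) {τ : Finset V} {m : ι → V}
    (hm : IsMins u τ m) (hd : Dominating u τ) {y : V} (hy : y ∈ τ) : ∃ i, m i = y := by
  obtain ⟨i, hi⟩ := hd y
  exact ⟨i, hu i (le_antisymm ((hm i).2 y hy) (hi _ (hm i).1))⟩

theorem facet_pair {ρ : Finset V} {u : ι → V → ℤ} (hcard : ρ.card + 1 = Fintype.card ι) {m : ι → V}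
    (hm : IsMins u ρ m) : ∃ i j, i ≠ j ∧ m i = m j ∧
      ∀ k, (∀ y ∈ ρ, ∃ l, l ≠ k ∧ m l = y) → k = i ∨ k = j := by
  obtain ⟨i, -, j, -, hij, h⟩ := Finset.exists_ne_map_eq_of_card_lt_of_maps_to
    (s := (univ : Finset ι)) (t := ρ) (f := m) (by rw [card_univ]; omega) (fun i _ => (hm i).1)
  refine ⟨i, j, hij, h, fun k hk => ?_⟩
  by_contra hne
  push Not at hne
  have hinj : Set.InjOn m (univ.erase k : Finset ι) := by
    apply Finset.injOn_of_surjOn_of_card_le (t := ρ) m (fun l _ => (hm l).1)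
    · intro y hy
      obtain ⟨l, hl, rfl⟩ := hk y hy
      exact ⟨l, by simp [hl], rfl⟩
    · rw [card_erase_of_mem (mem_univ _), card_univ]; omega
  exact hij (hinj (by simpa using Ne.symm hne.1) (by simpa using Ne.symm hne.2) h)

theorem exists_room {ρ : Finset V} {u : ι → V → ℤ} {m : ι → V}
    (hm : IsMins u ρ m) (hd : Dominating u ρ) (k : ι) (hk : ∀ y ∈ ρ, ∃ l, l ≠ k ∧ m l = y)
    (hne : ∃ y, ∀ l, l ≠ k → u l (m l) < u l y) :
    ∃ y, y ∉ ρ ∧ (∀ l, l ≠ k → u l (m l) < u l y) ∧ Dominating u (insert y ρ) := by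
  classical
  obtain ⟨y0, hy0⟩ := hne
  obtain ⟨y, hy, hmax⟩ := (univ.filter (fun y => ∀ l, l ≠ k → u l (m l) < u l y)).exists_max_image
    (u k) ⟨y0, by simpa using hy0⟩
  simp only [mem_filter, mem_univ, true_and] at hy hmax
  refine ⟨y, ?_, hy, ?_⟩
  · intro hyr
    obtain ⟨l, hl, rfl⟩ := hk y hyr
    exact lt_irrefl _ (hy l hl)
  · intro z
    by_cases hz : ∀ l, l ≠ k → u l (m l) < u l z
    · refine ⟨k, fun x hx => ?_⟩
      rcases mem_insert.1 hx with rfl | hx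
      · exact hmax z hz
      · obtain ⟨l, hl⟩ := hd z
        by_cases hlk : l = k
        · subst hlk; exact hl x hx
        · exact absurd (hl _ (hm l).1) (not_le.2 (hz l hlk))
    · push Not at hz
      obtain ⟨l, hlk, hl⟩ := hz
      refine ⟨l, fun x hx => ?_⟩
      rcases mem_insert.1 hx with rfl | hx
      · exact hl.trans (hy l hlk).le
      · exact hl.trans ((hm l).2 x hx)

theorem room_unique {ρ : Finset V} {u : ι → V → ℤ} (hu : ∀ i, Function.Injective (u i)) {m : ι → V}
    (hm : IsMins u ρ m) (k : ι) {y z : V}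
    (hy : ∀ l, l ≠ k → u l (m l) < u l y) (hz : ∀ l, l ≠ k → u l (m l) < u l z)
    (hdy : Dominating u (insert y ρ)) (hdz : Dominating u (insert z ρ)) : y = z := by
  have key : ∀ a b : V, (∀ l, l ≠ k → u l (m l) < u l b) → Dominating u (insert a ρ) →
      u k b ≤ u k a := by
    intro a b hb hda
    obtain ⟨l, hl⟩ := hda b
    by_cases hlk : l = k
    · subst hlk; exact hl a (mem_insert_self _ _)
    · exact absurd (hl _ (mem_insert_of_mem (hm l).1)) (not_le.2 (hb l hlk))
  exact hu k (le_antisymm (key z y hy hdz) (key y z hz hdy))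

theorem room_index {ρ : Finset V} {u : ι → V → ℤ} (hu : ∀ i, Function.Injective (u i)) {m : ι → V}
    (hm : IsMins u ρ m) (hcard : ρ.card + 1 = Fintype.card ι) {y : V} (hy : y ∉ ρ)
    (hd : Dominating u (insert y ρ)) :
    ∃ k, (∀ l, l ≠ k → u l (m l) < u l y) ∧ ∀ x ∈ ρ, ∃ l, l ≠ k ∧ m l = x := by
  obtain ⟨m', hm'⟩ := exists_mins u (insert y ρ) ⟨y, mem_insert_self _ _⟩
  have hinj : Set.InjOn m' (univ : Finset ι) := by
    apply Finset.injOn_of_surjOn_of_card_le (t := insert y ρ) m' (fun l _ => (hm' l).1)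
    · intro x hx
      obtain ⟨l, rfl⟩ := mins_surj hu hm' hd hx
      exact ⟨l, by simp, rfl⟩
    · rw [card_univ, card_insert_of_notMem hy]; omega
  obtain ⟨k, hk⟩ := mins_surj hu hm' hd (mem_insert_self y ρ)
  have heq : ∀ l, l ≠ k → m' l = m l := by
    intro l hl
    have h1 : m' l ≠ y := fun h => hl (hinj (by simp) (by simp) (h.trans hk.symm))
    have h2 : m' l ∈ ρ := (mem_insert.1 (hm' l).1).resolve_left h1
    exact hu l (le_antisymm ((hm' l).2 _ (mem_insert_of_mem (hm l).1)) ((hm l).2 _ h2))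
  refine ⟨k, fun l hl => ?_, fun x hx => ?_⟩
  · rw [← heq l hl]
    refine lt_of_le_of_ne ((hm' l).2 _ (mem_insert_self _ _)) fun h => ?_
    have := hu l h
    rw [heq l hl] at this
    exact hy (this ▸ (hm l).1)
  · obtain ⟨l, hl⟩ := mins_surj hu hm' hd (mem_insert_of_mem hx)
    have : l ≠ k := by
      rintro rfl
      exact hy (by rw [← hk, hl]; exact hx)
    exact ⟨l, this, by rw [← heq l this, hl]⟩

theorem scarf (u : ι → V → ℤ) (hu : ∀ i, Function.Injective (u i)) (s : ι → V)
    (h1 : ∀ i v, u i (s i) ≤ u i v)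
    (h2 : ∀ i j v, j ≠ i → v ∉ Set.range s → u i v < u i (s j))
    (c : V → ι) (hc : ∀ i, c (s i) = i) (i0 : ι) (v0 : V) (hv0 : v0 ∉ Set.range s) :
    ∃ τ : Finset V, τ.card = Fintype.card ι ∧ Dominating u τ ∧ τ.image c = univ := by
  classical
  by_contra hcon
  push Not at hcon
  set R : Finset (Finset V) := univ.filter fun τ => τ.card = Fintype.card ι ∧ Dominating u τ with hR
  set F : Finset (Finset V) := univ.filter fun ρ => ρ.card + 1 = Fintype.card ι ∧
    ρ.image c = univ.erase i0 with hF
  have hsum := Finset.sum_card_bipartiteAbove_eq_sum_card_bipartiteBelow (s := R) (t := F)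
    (fun τ ρ => ρ ⊆ τ)
  have hsinj : Function.Injective s := fun a b h => by rw [← hc a, ← hc b, h]
  -- rooms
  have hroom : ∀ τ ∈ R, Even (F.bipartiteAbove (fun τ ρ => ρ ⊆ τ) τ).card := by
    intro τ hτ
    simp only [hR, mem_filter, mem_univ, true_and] at hτ
    rcases (F.bipartiteAbove (fun τ ρ => ρ ⊆ τ) τ).eq_empty_or_nonempty with h | ⟨ρ, hρ⟩
    · simp [h]
    simp only [bipartiteAbove, hF, mem_filter, mem_univ, true_and] at hρ
    obtain ⟨⟨hρc, hρi⟩, hρτ⟩ := hρ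
    have hdiff : (τ \ ρ).card = 1 := by rw [card_sdiff_of_subset hρτ]; omega
    obtain ⟨x, hx⟩ := card_eq_one.1 hdiff
    have hxτ : x ∈ τ := (mem_sdiff.1 (hx ▸ mem_singleton_self x)).1
    have hxρ : x ∉ ρ := (mem_sdiff.1 (hx ▸ mem_singleton_self x)).2
    have hτi : insert x ρ = τ := by
      apply eq_of_subset_of_card_le (insert_subset hxτ hρτ)
      rw [card_insert_of_notMem hxρ]; omega
    have hcx : c x ≠ i0 := by
      intro h
      apply hcon τ hτ.1 hτ.2
      rw [← hτi, image_insert, hρi, h, insert_erase (mem_univ _)]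
    have : c x ∈ ρ.image c := by rw [hρi]; simp [hcx]
    obtain ⟨x', hx', hcx'⟩ := mem_image.1 this
    have hcinj : Set.InjOn c ρ := by
      apply Finset.injOn_of_card_image_eq
      rw [hρi, card_erase_of_mem (mem_univ _), card_univ]; omega
    have hxx' : x ≠ x' := fun h => hxρ (h ▸ hx')
    have : F.bipartiteAbove (fun τ ρ => ρ ⊆ τ) τ = {τ.erase x, τ.erase x'} := by
      ext κ
      simp only [bipartiteAbove, hF, mem_filter, mem_univ, true_and, mem_insert, mem_singleton]
      constructor
      · rintro ⟨⟨hκc, hκi⟩, hκτ⟩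
        have hdiff : (τ \ κ).card = 1 := by rw [card_sdiff_of_subset hκτ]; omega
        obtain ⟨z, hz⟩ := card_eq_one.1 hdiff
        have hzτ : z ∈ τ := (mem_sdiff.1 (hz ▸ mem_singleton_self z)).1
        have hzκ : z ∉ κ := (mem_sdiff.1 (hz ▸ mem_singleton_self z)).2
        have hκ : κ = τ.erase z := by
          apply eq_of_subset_of_card_le (subset_erase.2 ⟨hκτ, hzκ⟩)
          rw [card_erase_of_mem hzτ]; omega
        by_cases hzx : z = x
        · left; rw [hκ, hzx]
        by_cases hzx' : z = x'
        · right; rw [hκ, hzx']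
        exfalso
        have hcinj' : Set.InjOn c κ := by
          apply Finset.injOn_of_card_image_eq
          rw [hκi, card_erase_of_mem (mem_univ _), card_univ]; omega
        apply hxx'
        apply hcinj' _ _ hcx'.symm
        · rw [hκ]; simp [hxτ, Ne.symm hzx]
        · rw [hκ]; simp [hρτ hx', Ne.symm hzx']
      · have e1 : τ.erase x = ρ := by rw [← hτi, erase_insert hxρ]
        rintro (rfl | rfl)
        · rw [e1]; exact ⟨⟨hρc, hρi⟩, hρτ⟩
        · refine ⟨⟨?_, ?_⟩, erase_subset _ _⟩
          · rw [card_erase_of_mem (hρτ hx')]; omega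
          · rw [← hρi]
            ext a
            simp only [mem_image, mem_erase]
            constructor
            · rintro ⟨w, ⟨hw, hwτ⟩, rfl⟩
              rw [← hτi] at hwτ
              rcases mem_insert.1 hwτ with rfl | h
              · exact ⟨x', hx', hcx'⟩
              · exact ⟨w, h, rfl⟩
            · rintro ⟨w, hw, rfl⟩
              by_cases hwx : w = x'
              · exact ⟨x, ⟨hxx', hxτ⟩, by rw [hwx, hcx']⟩
              · exact ⟨w, ⟨hwx, hρτ hw⟩, rfl⟩
    rw [this, card_pair]
    · exact even_two
    · intro h
      have : x ∈ τ.erase x' := by simp [hxx', hxτ]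
      rw [← h] at this
      simp at this
  -- ρ side
  set ρ0 : Finset V := (univ.erase i0).image s with hρ0
  have hcpos : 0 < Fintype.card ι := Fintype.card_pos_iff.2 ⟨i0⟩
  have hρ0c : ρ0.card + 1 = Fintype.card ι := by
    rw [hρ0, card_image_of_injective _ hsinj, card_erase_of_mem (mem_univ _), card_univ]; omega
  have hρ0F : ρ0 ∈ F := by
    simp only [hF, mem_filter, mem_univ, true_and]
    refine ⟨hρ0c, ?_⟩
    rw [hρ0, image_image]
    have : c ∘ s = id := funext hc
    rw [this, image_id]
  have insert_form : ∀ ρ ∈ F, ∀ τ, (τ ∈ R ∧ ρ ⊆ τ) ↔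
      ∃ y, y ∉ ρ ∧ Dominating u (insert y ρ) ∧ τ = insert y ρ := by
    intro ρ hρ τ
    simp only [hF, mem_filter, mem_univ, true_and] at hρ
    simp only [hR, mem_filter, mem_univ, true_and]
    constructor
    · rintro ⟨⟨hτc, hτd⟩, hs⟩
      have hdiff : (τ \ ρ).card = 1 := by rw [card_sdiff_of_subset hs]; omega
      obtain ⟨x, hx⟩ := card_eq_one.1 hdiff
      have hxτ : x ∈ τ := (mem_sdiff.1 (hx ▸ mem_singleton_self x)).1
      have hxρ : x ∉ ρ := (mem_sdiff.1 (hx ▸ mem_singleton_self x)).2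
      have hτi : insert x ρ = τ := by
        apply eq_of_subset_of_card_le (insert_subset hxτ hs)
        rw [card_insert_of_notMem hxρ]; omega
      exact ⟨x, hxρ, hτi ▸ hτd, hτi.symm⟩
    · rintro ⟨y, hy, hd, rfl⟩
      exact ⟨⟨by rw [card_insert_of_notMem hy]; omega, hd⟩, subset_insert _ _⟩
  have hfacet : ∀ ρ ∈ F, ρ ≠ ρ0 → Even (R.bipartiteBelow (fun τ ρ => ρ ⊆ τ) ρ).card := by
    intro ρ hρ hne
    have hform := insert_form ρ hρ
    simp only [hF, mem_filter, mem_univ, true_and] at hρ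
    obtain ⟨hρc, hρi⟩ := hρ
    -- real element
    obtain ⟨r, hr, hrs⟩ : ∃ r ∈ ρ, r ∉ Set.range s := by
      by_contra hall
      push Not at hall
      apply hne
      apply eq_of_subset_of_card_le
      · intro x hx
        obtain ⟨j, rfl⟩ := hall x hx
        have : c (s j) ∈ ρ.image c := mem_image_of_mem _ hx
        rw [hρi, hc] at this
        exact mem_image_of_mem _ this
      · omega
    rcases (R.bipartiteBelow (fun τ ρ => ρ ⊆ τ) ρ).eq_empty_or_nonempty with h | ⟨τ, hτ⟩
    · simp [h]
    simp only [bipartiteBelow, mem_filter] at hτ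
    obtain ⟨y0, hy0, hd0, -⟩ := (hform τ).1 hτ
    have hd : Dominating u ρ := fun y => by
      obtain ⟨i, hi⟩ := hd0 y
      exact ⟨i, fun x hx => hi x (mem_insert_of_mem hx)⟩
    obtain ⟨m, hm⟩ := exists_mins u ρ ⟨r, hr⟩
    obtain ⟨i, j, hij, hmij, huniq⟩ := facet_pair hρc hm
    have hM : ∀ k, ∃ y, ∀ l, l ≠ k → u l (m l) < u l y := fun k =>
      ⟨s k, fun l hl => lt_of_le_of_lt ((hm l).2 r hr) (h2 l k r hl.symm hrs)⟩
    have hsi : ∀ y ∈ ρ, ∃ l, l ≠ i ∧ m l = y := by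
      intro y hy
      obtain ⟨l, hl⟩ := mins_surj hu hm hd hy
      by_cases hli : l = i
      · exact ⟨j, hij.symm, by rw [← hmij, ← hli, hl]⟩
      · exact ⟨l, hli, hl⟩
    have hsj : ∀ y ∈ ρ, ∃ l, l ≠ j ∧ m l = y := by
      intro y hy
      obtain ⟨l, hl⟩ := mins_surj hu hm hd hy
      by_cases hli : l = j
      · exact ⟨i, hij, by rw [hmij, ← hli, hl]⟩
      · exact ⟨l, hli, hl⟩
    obtain ⟨a, haρ, ha, hda⟩ := exists_room hm hd i hsi (hM i)
    obtain ⟨b, hbρ, hb, hdb⟩ := exists_room hm hd j hsj (hM j)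
    have hab : a ≠ b := by
      rintro rfl
      obtain ⟨l, hl⟩ := hd a
      have hl' := hl _ (hm l).1
      by_cases hli : l = i
      · exact absurd hl' (not_le.2 (hb l (hli ▸ hij)))
      · exact absurd hl' (not_le.2 (ha l hli))
    have : R.bipartiteBelow (fun τ ρ => ρ ⊆ τ) ρ = {insert a ρ, insert b ρ} := by
      ext τ
      simp only [bipartiteBelow, mem_filter, mem_insert, mem_singleton]
      rw [hform τ]
      constructor
      · rintro ⟨y, hy, hdy, rfl⟩
        obtain ⟨k, hk, hks⟩ := room_index hu hm hρc hy hdy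
        rcases huniq k hks with rfl | rfl
        · left; rw [room_unique hu hm _ hk ha hdy hda]
        · right; rw [room_unique hu hm _ hk hb hdy hdb]
      · rintro (rfl | rfl)
        · exact ⟨a, haρ, hda, rfl⟩
        · exact ⟨b, hbρ, hdb, rfl⟩
    rw [this, card_pair]
    · exact even_two
    · intro h
      have : a ∈ insert b ρ := h ▸ mem_insert_self a ρ
      rcases mem_insert.1 this with h | h
      · exact hab h
      · exact haρ h
  have hspecial : (R.bipartiteBelow (fun τ ρ => ρ ⊆ τ) ρ0).card = 1 := by
    obtain ⟨t, ht, hmax⟩ := (univ.filter (fun v => v ∉ Set.range s)).exists_max_image (u i0)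
      ⟨v0, by simpa using hv0⟩
    simp only [mem_filter, mem_univ, true_and] at ht hmax
    have hlt : ∀ i v, v ∉ Set.range s → u i (s i) < u i v := fun i v hv =>
      lt_of_le_of_ne (h1 i v) fun h => hv ⟨i, hu i h⟩
    rw [card_eq_one]
    refine ⟨insert t ρ0, ?_⟩
    ext τ
    simp only [bipartiteBelow, mem_filter, mem_singleton]
    rw [insert_form ρ0 hρ0F]
    have hmemρ0 : ∀ j, j ≠ i0 → s j ∈ ρ0 := fun j hj => mem_image_of_mem _ (by simp [hj])
    constructor
    · rintro ⟨y, hy, hdy, rfl⟩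
      have key : ∀ z, z ∉ Set.range s → u i0 z ≤ u i0 y := by
        intro z hz
        obtain ⟨i, hi⟩ := hdy z
        by_cases hii : i = i0
        · subst hii; exact hi _ (mem_insert_self _ _)
        · exact absurd (hi _ (mem_insert_of_mem (hmemρ0 i hii))) (not_le.2 (hlt i z hz))
      have hys : y ∉ Set.range s := by
        rintro ⟨j, rfl⟩
        by_cases hj : j = i0
        · subst hj; exact absurd (key t ht) (not_le.2 (hlt _ _ ht))
        · exact hy (hmemρ0 j hj)
      rw [hu i0 (le_antisymm (hmax y hys) (key t ht))]
    · rintro rfl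
      refine ⟨t, ?_, ?_, rfl⟩
      · intro h
        obtain ⟨j, -, hj⟩ := mem_image.1 h
        exact ht ⟨j, hj⟩
      · intro z
        by_cases hz : z ∈ Set.range s
        · obtain ⟨j, rfl⟩ := hz
          exact ⟨j, fun x _ => h1 j x⟩
        · refine ⟨i0, fun x hx => ?_⟩
          rcases mem_insert.1 hx with rfl | hx
          · exact hmax z hz
          · obtain ⟨j, hj, rfl⟩ := mem_image.1 hx
            exact (h2 i0 j z (by simpa using hj) hz).le
  have hE : Even (∑ τ ∈ R, (F.bipartiteAbove (fun τ ρ => ρ ⊆ τ) τ).card) :=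
    Finset.even_sum _ hroom
  rw [hsum, ← Finset.add_sum_erase _ _ hρ0F, hspecial] at hE
  have hE2 : Even (∑ ρ ∈ F.erase ρ0, (R.bipartiteBelow (fun τ ρ => ρ ⊆ τ) ρ).card) :=
    Finset.even_sum _ fun ρ hρ => hfacet ρ (mem_of_mem_erase hρ) (ne_of_mem_erase hρ)
  obtain ⟨a, ha⟩ := hE
  obtain ⟨b, hb⟩ := hE2
  omega

end Scarf

section Grid
variable {ι : Type*} [Fintype ι] [DecidableEq ι]

def IsGrid (K : ℕ) (a : ι → ℤ) : Prop := (∀ i, 0 ≤ a i) ∧ ∑ i, a i = K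

theorem grid_finite (K : ℕ) : Finite {a : ι → ℤ // IsGrid K a} := by
  have : (Set.Icc (0 : ι → ℤ) (fun _ => (K : ℤ))).Finite := Set.finite_Icc _ _
  refine (this.subset ?_ : Set.Finite {a : ι → ℤ | IsGrid K a})
  intro a ha
  refine ⟨fun i => ha.1 i, fun i => ?_⟩
  show a i ≤ K
  rw [← ha.2]
  exact Finset.single_le_sum (fun j _ => ha.1 j) (mem_univ i)

theorem grid_lemma [Nonempty ι] (K : ℕ) (c : (ι → ℤ) → ι) :
    ∃ (p : ι → ℤ) (q : ι → ι → ℤ), IsGrid K p ∧ (∀ i, IsGrid K (q i)) ∧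
      (∀ i j, |q i j - p j| ≤ Fintype.card ι) ∧
      ∀ i, c (q i) = i ∨ q i i ≤ Fintype.card ι := by
  classical
  obtain ⟨i0⟩ := ‹Nonempty ι›
  have := grid_finite (ι := ι) K
  let _ : Fintype {a : ι → ℤ // IsGrid K a} := Fintype.ofFinite _
  set V := {a : ι → ℤ // IsGrid K a} ⊕ ι with hV
  let pos : V → ι → ℤ := Sum.elim (fun a => a.1) (fun j i => if i = j then -1 else K + 1)
  let e := Fintype.equivFin V
  let M : ℤ := Fintype.card V
  let u : ι → V → ℤ := fun i v => pos v i * M + (e v : ℕ)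
  have he0 : ∀ v, (0 : ℤ) ≤ ((e v : ℕ) : ℤ) := fun v => Int.natCast_nonneg _
  have heM : ∀ v, ((e v : ℕ) : ℤ) < M := fun v => by
    show ((e v : ℕ) : ℤ) < (Fintype.card V : ℤ)
    exact_mod_cast (e v).2
  have hlt : ∀ i v w, pos v i < pos w i → u i v < u i w := by
    intro i v w h
    have := he0 w
    have := heM v
    have hM : 0 < M := lt_of_le_of_lt (he0 v) this
    show pos v i * M + _ < pos w i * M + _
    nlinarith
  have hu : ∀ i, Function.Injective (u i) := by
    intro i v w h
    have h0 : pos v i = pos w i := by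
      rcases lt_trichotomy (pos v i) (pos w i) with h' | h' | h'
      · exact absurd h (hlt i v w h').ne
      · exact h'
      · exact absurd h (hlt i w v h').ne'
    have h' : pos v i * M + ((e v : ℕ) : ℤ) = pos w i * M + ((e w : ℕ) : ℤ) := h
    rw [h0] at h'
    have : (e v : ℕ) = e w := by exact_mod_cast add_left_cancel h'
    exact e.injective (Fin.ext this)
  have hle : ∀ (a : {a : ι → ℤ // IsGrid K a}) i, a.1 i ≤ K := by
    intro a i
    rw [← a.2.2]
    exact Finset.single_le_sum (fun j _ => a.2.1 j) (mem_univ i)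
  have hself : ∀ i, pos (Sum.inr i) i = -1 := fun i => by simp [pos]
  have hoff : ∀ i j, j ≠ i → pos (Sum.inr j) i = K + 1 := fun i j h => by simp [pos, h.symm]
  have hposge : ∀ v i, -1 ≤ pos v i := by
    rintro (a | j) i
    · have := a.2.1 i
      show -1 ≤ a.1 i
      omega
    · by_cases h : j = i
      · rw [h, hself]
      · rw [hoff i j h]; omega
  obtain ⟨v0, hv0⟩ : ∃ v0 : V, v0 ∉ Set.range (Sum.inr : ι → V) := by
    refine ⟨Sum.inl ⟨Pi.single i0 (K : ℤ), fun i => ?_, ?_⟩, by simp⟩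
    · by_cases h : i = i0
      · subst h; simp
      · simp [h]
    · simp
  obtain ⟨τ, hτc, hτd, hτi⟩ := scarf u hu Sum.inr
    (by
      rintro i (a | j)
      · exact (hlt i _ _ (by rw [hself]; have := a.2.1 i; show -1 < a.1 i; omega)).le
      · by_cases h : j = i
        · rw [h]
        · exact (hlt i _ _ (by rw [hself, hoff i j h]; omega)).le)
    (by
      rintro i j (a | l) hji hv
      · exact hlt i _ _ (by rw [hoff i j hji]; have := hle a i; show a.1 i < _; omega)
      · simp at hv)
    (Sum.elim (fun a => c a.1) id) (fun i => rfl) i0 v0 hv0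
  have hτne : τ.Nonempty := by
    rw [← card_pos, hτc]; exact Fintype.card_pos_iff.2 ⟨i0⟩
  have hmin : ∀ i, ∃ y ∈ τ, ∀ x ∈ τ, pos y i ≤ pos x i := fun i =>
    τ.exists_min_image (fun v => pos v i) hτne
  choose mn hmn hmn' using hmin
  let d : ι → ℤ := fun i => pos (mn i) i + 1
  have hd0 : ∀ i, 0 ≤ d i := fun i => by have := hposge (mn i) i; show 0 ≤ pos (mn i) i + 1; omega
  have hdsum : (K : ℤ) + 1 ≤ ∑ i, d i := by
    by_contra hcon
    push Not at hcon
    have hgr : IsGrid K (d + Pi.single i0 ((K : ℤ) - ∑ i, d i)) := by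
      constructor
      · intro i
        by_cases h : i = i0
        · subst h; have := hd0 i; simp; omega
        · simpa [h] using hd0 i
      · simp [sum_add_distrib]
    obtain ⟨i, hi⟩ := hτd (Sum.inl ⟨_, hgr⟩)
    refine absurd (hi _ (hmn i)) (not_le.2 (hlt i _ _ ?_))
    show pos (mn i) i < (d + Pi.single i0 ((K : ℤ) - ∑ i, d i) : ι → ℤ) i
    have : 0 ≤ (Pi.single i0 ((K : ℤ) - ∑ i, d i) : ι → ℤ) i := by
      by_cases h : i = i0
      · subst h; simp; omega
      · simp [h]
    have h2 : d i = pos (mn i) i + 1 := rfl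
    simp only [Pi.add_apply]
    omega
  have hlow : ∀ a, (Sum.inl a : V) ∈ τ → ∀ i, d i ≤ a.1 i + 1 := by
    intro a ha i
    have := hmn' i _ ha
    have h2 : d i = pos (mn i) i + 1 := rfl
    have h3 : pos (Sum.inl a : V) i = a.1 i := rfl
    omega
  have hup : ∀ a, (Sum.inl a : V) ∈ τ → ∀ i, a.1 i + 1 ≤ d i + (Fintype.card ι - 1) := by
    intro a ha i
    have h1 : ∑ j, (a.1 j + 1 - d j) ≤ (Fintype.card ι : ℤ) - 1 := by
      rw [sum_sub_distrib, sum_add_distrib, a.2.2]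
      simp
      omega
    have h2 : a.1 i + 1 - d i ≤ ∑ j, (a.1 j + 1 - d j) :=
      Finset.single_le_sum (f := fun j => a.1 j + 1 - d j)
        (fun j _ => by have := hlow a ha j; show 0 ≤ a.1 j + 1 - d j; omega) (mem_univ i)
    omega
  -- a real point
  obtain ⟨p, hp⟩ : ∃ p, (Sum.inl p : V) ∈ τ := by
    by_contra hall
    push Not at hall
    have : τ = univ.image (Sum.inr : ι → V) := by
      apply eq_of_subset_of_card_le
      · rintro (a | j) h
        · exact absurd h (hall a)
        · simp
      · rw [card_image_of_injective _ Sum.inr_injective, card_univ, hτc]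
    rcases v0 with a | j
    · obtain ⟨i, hi⟩ := hτd (Sum.inl a)
      refine absurd (hi (Sum.inr i) (by rw [this]; simp)) (not_le.2 (hlt i _ _ ?_))
      rw [hself]; have := a.2.1 i; show -1 < a.1 i; omega
    · simp at hv0
  have hq : ∀ i, ∃ q, (Sum.inl q : V) ∈ τ ∧ (c q.1 = i ∨ q.1 i ≤ Fintype.card ι) := by
    intro i
    have : i ∈ τ.image (Sum.elim (fun a => c a.1) id) := by rw [hτi]; simp
    obtain ⟨v, hv, hvi⟩ := mem_image.1 this
    rcases v with a | j
    · exact ⟨a, hv, Or.inl hvi⟩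
    · refine ⟨p, hp, Or.inr ?_⟩
      have hji : j = i := hvi
      subst hji
      have h1 := hmn' j _ hv
      rw [hself] at h1
      have h2 := hup p hp j
      have h3 : d j = pos (mn j) j + 1 := rfl
      omega
  choose q hqτ hq using hq
  refine ⟨p.1, fun i => (q i).1, p.2, fun i => (q i).2, fun i j => ?_, hq⟩
  have a1 := hlow p hp j
  have a2 := hup p hp j
  have a3 := hlow _ (hqτ i) j
  have a4 := hup _ (hqτ i) j
  show |(q i).1 j - p.1 j| ≤ _
  rw [abs_le]
  constructor <;> omega

theorem brouwer_simplex [Nonempty ι] (f : (ι → ℝ) → ι → ℝ) (hf : Continuous f)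
    (hmaps : ∀ x ∈ stdSimplex ℝ ι, f x ∈ stdSimplex ℝ ι) : ∃ x ∈ stdSimplex ℝ ι, f x = x := by
  classical
  let sc : ℕ → (ι → ℤ) → ι → ℝ := fun k a i => (a i : ℝ) / (k + 1 : ℝ)
  have hsc : ∀ k a, IsGrid (k + 1) a → sc k a ∈ stdSimplex ℝ ι := by
    intro k a ha
    have hk : (0 : ℝ) < k + 1 := by positivity
    refine ⟨fun i => div_nonneg (by exact_mod_cast ha.1 i) hk.le, ?_⟩
    show ∑ i, (a i : ℝ) / (k + 1 : ℝ) = 1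
    rw [← sum_div, div_eq_one_iff_eq hk.ne']
    have := ha.2
    exact_mod_cast this
  have hlab : ∀ x ∈ stdSimplex ℝ ι, ∃ i, x i ≤ f x i := by
    intro x hx
    by_contra hcon
    push Not at hcon
    have h := Finset.sum_lt_sum_of_nonempty (univ_nonempty (α := ι)) (fun i _ => hcon i)
    rw [(hmaps x hx).2, hx.2] at h
    exact lt_irrefl _ h
  have hlab' : ∀ x, ∃ i, x ∈ stdSimplex ℝ ι → x i ≤ f x i := by
    intro x
    by_cases hx : x ∈ stdSimplex ℝ ι
    · obtain ⟨i, hi⟩ := hlab x hx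
      exact ⟨i, fun _ => hi⟩
    · exact ⟨Classical.arbitrary ι, fun h => absurd h hx⟩
  choose lab hlab' using hlab'
  have hmain : ∀ k : ℕ, ∃ (P : ι → ℝ) (Q : ι → ι → ℝ), P ∈ stdSimplex ℝ ι ∧
      (∀ i j, |Q i j - P j| ≤ Fintype.card ι * (1 / ((k : ℝ) + 1))) ∧
      ∀ i, Q i i ≤ f (Q i) i + Fintype.card ι * (1 / ((k : ℝ) + 1)) := by
    intro k
    have hk : (0 : ℝ) < k + 1 := by positivity
    obtain ⟨p, q, hp, hq, hpq, hl⟩ := grid_lemma (k + 1) (fun a => lab (sc k a))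
    refine ⟨sc k p, fun i => sc k (q i), hsc k p hp, fun i j => ?_, fun i => ?_⟩
    · show |(q i j : ℝ) / (k + 1 : ℝ) - (p j : ℝ) / (k + 1 : ℝ)| ≤ _
      rw [← sub_div, abs_div, abs_of_pos hk, mul_one_div]
      apply div_le_div_of_nonneg_right _ hk.le
      exact_mod_cast hpq i j
    · have hS := hsc k _ (hq i)
      have hnn : 0 ≤ (Fintype.card ι : ℝ) * (1 / ((k : ℝ) + 1)) := by positivity
      rcases hl i with h | h
      · have := hlab' _ hS
        rw [h] at this
        linarith
      · have h1 := (hmaps _ hS).1 i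
        have h2 : sc k (q i) i ≤ (Fintype.card ι : ℝ) * (1 / ((k : ℝ) + 1)) := by
          show (q i i : ℝ) / (k + 1 : ℝ) ≤ _
          rw [mul_one_div]
          apply div_le_div_of_nonneg_right _ hk.le
          exact_mod_cast h
        linarith
  choose P Q hP hPQ hQ using hmain
  obtain ⟨x, hx, φ, hφ, hlim⟩ := (isCompact_stdSimplex ℝ ι).tendsto_subseq hP
  have hzero : Tendsto (fun k : ℕ => (Fintype.card ι : ℝ) * (1 / (((φ k : ℕ) : ℝ) + 1))) atTop
      (nhds 0) := by
    have := (tendsto_one_div_add_atTop_nhds_zero_nat (𝕜 := ℝ)).comp hφ.tendsto_atTop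
    simpa using this.const_mul (Fintype.card ι : ℝ)
  have hQlim : ∀ i, Tendsto (fun k => Q (φ k) i) atTop (nhds x) := by
    intro i
    rw [tendsto_pi_nhds] at hlim ⊢
    intro j
    have h0 : Tendsto (fun k => Q (φ k) i j - P (φ k) j) atTop (nhds 0) :=
      squeeze_zero_norm (fun k => hPQ (φ k) i j) hzero
    have := h0.add (hlim j)
    simpa using this
  have hge : ∀ i, x i ≤ f x i := by
    intro i
    have l1 : Tendsto (fun k => Q (φ k) i i) atTop (nhds (x i)) := (tendsto_pi_nhds.1 (hQlim i)) i
    have l2 : Tendsto (fun k => f (Q (φ k) i) i) atTop (nhds (f x i)) :=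
      (tendsto_pi_nhds.1 ((hf.tendsto x).comp (hQlim i))) i
    have := le_of_tendsto_of_tendsto' l1 (l2.add hzero) (fun k => hQ (φ k) i)
    simpa using this
  refine ⟨x, hx, ?_⟩
  have hsum : ∑ i, x i = ∑ i, f x i := by rw [hx.2, (hmaps x hx).2]
  have := (Finset.sum_eq_sum_iff_of_le (fun i _ => hge i)).1 hsum
  funext i
  exact (this i (mem_univ i)).symm

end Grid

theorem contract_update {N : ℕ} {m : Fin N → ℕ} (T : (∀ i, Fin (m i)) → ℝ)
    (x : ∀ i, Fin (m i) → ℝ) (i : Fin N) (y : Fin (m i) → ℝ) :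
    contract T (Function.update x i y) =
      ∑ k, y k * contract T (Function.update x i (Pi.single k 1)) := by
  have key : ∀ z : Fin (m i) → ℝ, contract T (Function.update x i z) =
      ∑ K : ∀ i, Fin (m i), T K * (z (K i) * ∏ l ∈ univ.erase i, x l (K l)) := by
    intro z
    unfold contract
    refine sum_congr rfl fun K _ => ?_
    rw [← mul_prod_erase univ _ (mem_univ i), Function.update_self]
    congr 2
    refine prod_congr rfl fun l hl => ?_
    rw [Function.update_of_ne (ne_of_mem_erase hl)]
  rw [key]
  simp_rw [key, mul_sum]
  rw [sum_comm]
  refine sum_congr rfl fun K _ => ?_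
  rw [Finset.sum_eq_single (K i)]
  · simp; ring
  · intro k _ hk
    simp [Pi.single_apply, hk.symm]
  · simp

theorem contract_continuous {N : ℕ} {m : Fin N → ℕ} (T : (∀ i, Fin (m i)) → ℝ) :
    Continuous (contract T) := by
  unfold contract
  fun_prop

section Nash
variable {N : ℕ} {m : Fin N → ℕ}

noncomputable def blockSum (x : (Σ i, Fin (m i)) → ℝ) (i : Fin N) : ℝ := ∑ k, x ⟨i, k⟩

noncomputable def blockDen (x : (Σ i, Fin (m i)) → ℝ) (i : Fin N) : ℝ :=
  max (blockSum x i) (1 / N)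

noncomputable def retr (x : (Σ i, Fin (m i)) → ℝ) (i : Fin N) (k : Fin (m i)) : ℝ :=
  (x ⟨i, k⟩ + (blockDen x i - blockSum x i) / m i) / blockDen x i

noncomputable def gain (A : Fin N → (∀ i, Fin (m i)) → ℝ) (x : ∀ i, Fin (m i) → ℝ)
    (i : Fin N) (k : Fin (m i)) : ℝ :=
  max 0 (contract (A i) x - contract (A i) (Function.update x i (Pi.single k 1)))

noncomputable def nashMap (A : Fin N → (∀ i, Fin (m i)) → ℝ) (x : ∀ i, Fin (m i) → ℝ)
    (i : Fin N) (k : Fin (m i)) : ℝ :=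
  (x i k + gain A x i k) / (1 + ∑ l, gain A x i l)

noncomputable def bigMap (A : Fin N → (∀ i, Fin (m i)) → ℝ) (x : (Σ i, Fin (m i)) → ℝ)
    (a : Σ i, Fin (m i)) : ℝ :=
  1 / N * nashMap A (retr x) a.1 a.2

theorem gain_nonneg (A : Fin N → (∀ i, Fin (m i)) → ℝ) (x : ∀ i, Fin (m i) → ℝ)
    (i : Fin N) (k : Fin (m i)) : 0 ≤ gain A x i k := le_max_left _ _

theorem gainden_pos (A : Fin N → (∀ i, Fin (m i)) → ℝ) (x : ∀ i, Fin (m i) → ℝ)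
    (i : Fin N) : 0 < 1 + ∑ l, gain A x i l := by
  have : 0 ≤ ∑ l, gain A x i l := sum_nonneg fun l _ => gain_nonneg A x i l
  linarith

theorem blockDen_pos (hN : 0 < N) (x : (Σ i, Fin (m i)) → ℝ) (i : Fin N) : 0 < blockDen x i :=
  lt_of_lt_of_le (by positivity) (le_max_right _ _)

theorem retr_mem (hN : 0 < N) (hm : ∀ i, 0 < m i) (x : (Σ i, Fin (m i)) → ℝ) (hx : ∀ a, 0 ≤ x a)
    (i : Fin N) : retr x i ∈ stdSimplex' (m i) := by
  have hD := blockDen_pos hN x i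
  have hmi : (0 : ℝ) < m i := by exact_mod_cast hm i
  constructor
  · intro k
    have : blockSum x i ≤ blockDen x i := le_max_left _ _
    exact div_nonneg (add_nonneg (hx _) (div_nonneg (by linarith) hmi.le)) hD.le
  · unfold retr
    rw [← sum_div, sum_add_distrib, div_eq_one_iff_eq hD.ne']
    rw [sum_const, card_univ, Fintype.card_fin, nsmul_eq_mul, mul_div_cancel₀ _ hmi.ne']
    unfold blockSum
    ring

theorem nashMap_mem (A : Fin N → (∀ i, Fin (m i)) → ℝ) (x : ∀ i, Fin (m i) → ℝ) (i : Fin N)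
    (hx : x i ∈ stdSimplex' (m i)) : nashMap A x i ∈ stdSimplex' (m i) := by
  have hG := gainden_pos A x i
  constructor
  · intro k
    exact div_nonneg (add_nonneg (hx.1 k) (gain_nonneg A x i k)) hG.le
  · unfold nashMap
    rw [← sum_div, sum_add_distrib, hx.2, div_self hG.ne']

theorem bigMap_continuous (hN : 0 < N) (A : Fin N → (∀ i, Fin (m i)) → ℝ) :
    Continuous (bigMap A) := by
  have hS : ∀ i : Fin N, Continuous fun x : (Σ i, Fin (m i)) → ℝ => blockSum x i := by
    intro i; unfold blockSum; fun_prop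
  have hD : ∀ i : Fin N, Continuous fun x : (Σ i, Fin (m i)) → ℝ => blockDen x i := by
    intro i; unfold blockDen; exact (hS i).max continuous_const
  have hr : Continuous (retr (N := N) (m := m)) := by
    refine continuous_pi fun i => continuous_pi fun k => ?_
    unfold retr
    exact ((continuous_apply _).add (((hD i).sub (hS i)).div_const _)).div (hD i)
      fun x => (blockDen_pos hN x i).ne'
  have hg : ∀ i k, Continuous fun x : (∀ i, Fin (m i) → ℝ) => gain A x i k := by
    intro i k
    unfold gain
    refine continuous_const.max ((contract_continuous _).sub ((contract_continuous _).comp ?_))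
    exact continuous_id.update i continuous_const
  have hn : ∀ i k, Continuous fun x : (∀ i, Fin (m i) → ℝ) => nashMap A x i k := by
    intro i k
    unfold nashMap
    refine Continuous.div (Continuous.add (by fun_prop) (hg i k))
      (continuous_const.add (continuous_finset_sum _ fun l _ => hg i l)) fun x => (gainden_pos A x i).ne'
  refine continuous_pi fun a => ?_
  unfold bigMap
  exact continuous_const.mul ((hn a.1 a.2).comp hr)

theorem bigMap_block (hN : 0 < N) (hm : ∀ i, 0 < m i) (A : Fin N → (∀ i, Fin (m i)) → ℝ)
    (x : (Σ i, Fin (m i)) → ℝ) (hx : ∀ a, 0 ≤ x a) (i : Fin N) :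
    blockSum (bigMap A x) i = 1 / N := by
  unfold blockSum bigMap
  simp only
  rw [← mul_sum, (nashMap_mem A _ i (retr_mem hN hm x hx i)).2, mul_one]

theorem exists_nash_fixed (hN : 0 < N) (hm : ∀ i, 0 < m i) (A : Fin N → (∀ i, Fin (m i)) → ℝ) :
    ∃ x : ∀ i, Fin (m i) → ℝ, (∀ i, x i ∈ stdSimplex' (m i)) ∧ nashMap A x = x := by
  have hNR : (0 : ℝ) < N := by exact_mod_cast hN
  have : Nonempty (Σ i, Fin (m i)) := ⟨⟨⟨0, hN⟩, ⟨0, hm _⟩⟩⟩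
  obtain ⟨x, hx, hfx⟩ := brouwer_simplex (bigMap A) (bigMap_continuous hN A) (by
    intro x hx
    constructor
    · intro a
      exact mul_nonneg (by positivity) ((nashMap_mem A _ _ (retr_mem hN hm x hx.1 _)).1 _)
    · rw [Fintype.sum_sigma]
      have : ∀ i, ∑ k, bigMap A x ⟨i, k⟩ = 1 / N := bigMap_block hN hm A x hx.1
      simp_rw [this]
      simp [hNR.ne'])
  refine ⟨retr x, retr_mem hN hm x hx.1, ?_⟩
  funext i k
  have hS : blockSum x i = 1 / N := by
    have := bigMap_block hN hm A x hx.1 i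
    rwa [hfx] at this
  have hD : blockDen x i = 1 / N := by unfold blockDen; rw [hS, max_self]
  have h1 : retr x i k = N * x ⟨i, k⟩ := by
    unfold retr
    rw [hD, hS]
    field_simp
    simp
  have h2 : 1 / N * nashMap A (retr x) i k = x ⟨i, k⟩ := congrFun hfx ⟨i, k⟩
  rw [h1, ← h2]
  field_simp

end Nash

/-- unconstrained special case, Nash's theorem for tensor games:
every finite N-player tensor game has a mixed-strategy equilibrium. -/
theorem tensor_game_has_equilibrium {N : ℕ} {m : Fin N → ℕ}
    (hm : ∀ i, 0 < m i)
    (A : Fin N → (∀ i, Fin (m i)) → ℝ) :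
    ∃ x : ∀ i, Fin (m i) → ℝ,
      (∀ i, x i ∈ stdSimplex' (m i)) ∧
      ∀ i, ∀ y ∈ stdSimplex' (m i),
        contract (A i) x ≤ contract (A i) (Function.update x i y) := by
  rcases Nat.eq_zero_or_pos N with rfl | hN
  · exact ⟨fun i => i.elim0, fun i => i.elim0, fun i => i.elim0⟩
  obtain ⟨x, hx, hfix⟩ := exists_nash_fixed hN hm A
  refine ⟨x, hx, fun i y hy => ?_⟩
  have hG := gainden_pos A x i
  have hfix' : ∀ k, x i k * ∑ l, gain A x i l = gain A x i k := by
    intro k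
    have h : (x i k + gain A x i k) / (1 + ∑ l, gain A x i l) = x i k :=
      congrFun (congrFun hfix i) k
    rw [div_eq_iff hG.ne'] at h
    linarith
  have hlin : contract (A i) x =
      ∑ k, x i k * contract (A i) (Function.update x i (Pi.single k 1)) := by
    rw [← contract_update, Function.update_eq_self]
  -- some strategy in the support has no gain
  have hsupp : ∃ k, 0 < x i k ∧ gain A x i k = 0 := by
    by_contra hcon
    push Not at hcon
    have hterm : ∀ k, x i k * contract (A i) (Function.update x i (Pi.single k 1)) ≤
        x i k * contract (A i) x ∧ (0 < x i k →
        x i k * contract (A i) (Function.update x i (Pi.single k 1)) < x i k * contract (A i) x) := by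
      intro k
      rcases (hx i).1 k |>.eq_or_lt with h | h
      · rw [← h]; simp
      · have hg := hcon k h
        have hlt : contract (A i) (Function.update x i (Pi.single k 1)) < contract (A i) x := by
          by_contra hle
          exact hg (max_eq_left (by linarith))
        have := mul_lt_mul_of_pos_left hlt h
        exact ⟨this.le, fun _ => this⟩
    have hpos : ∃ k, 0 < x i k := by
      by_contra hno
      push Not at hno
      have := Finset.sum_nonpos (s := univ) (fun k _ => hno k)
      rw [(hx i).2] at this
      linarith
    obtain ⟨k, hk⟩ := hpos
    have := Finset.sum_lt_sum (s := univ) (fun k _ => (hterm k).1) ⟨k, mem_univ k, (hterm k).2 hk⟩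
    rw [← hlin, ← sum_mul, (hx i).2, one_mul] at this
    exact lt_irrefl _ this
  obtain ⟨k, hk, hgk⟩ := hsupp
  have hG0 : ∑ l, gain A x i l = 0 := by
    have := hfix' k
    rw [hgk] at this
    exact (mul_eq_zero.1 this).resolve_left hk.ne'
  have hle : ∀ l, contract (A i) x ≤ contract (A i) (Function.update x i (Pi.single l 1)) := by
    intro l
    have h0 : gain A x i l = 0 := by rw [← hfix' l, hG0, mul_zero]
    have h1 : contract (A i) x - contract (A i) (Function.update x i (Pi.single l 1)) ≤
      gain A x i l := le_max_right _ _
    linarith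
  rw [contract_update]
  calc contract (A i) x = ∑ l, y l * contract (A i) x := by rw [← sum_mul, hy.2, one_mul]
    _ ≤ _ := sum_le_sum fun l _ => mul_le_mul_of_nonneg_left (hle l) (hy.1 l)
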